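/- Let T be a tree of order n. Then IC(T) = n − 1 if and only if T is isomorphic to one of the following: the path P_5, the path P_6, the double star S_{1,2}, or the star K_{1,3}. -/

import Mathlib

namespace ICNL

variable {V : Type*}

/-- `S` is a dominating set of `G`. -/
def Dominating (G : SimpleGraph V) (S : Set V) : Prop :=
  ∀ v : V, v ∈ S ∨ ∃ u ∈ S, G.Adj u v

/-- `S` is an independent set of `G`. -/
def IndepSet (G : SimpleGraph V) (S : Set V) : Prop :=
  ∀ ⦃u : V⦄, u ∈ S → ∀ ⦃v : V⦄, v ∈ S → ¬ G.Adj u v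

/-- `S` is an independent dominating set of `G`. -/
def IndepDom (G : SimpleGraph V) (S : Set V) : Prop :=
  IndepSet G S ∧ Dominating G S

/-- `A` and `B` form an independent coalition in `G`. -/
def ICCoalition (G : SimpleGraph V) (A B : Set V) : Prop :=
  Disjoint A B ∧ IndepSet G A ∧ IndepSet G B ∧
    ¬ IndepDom G A ∧ ¬ IndepDom G B ∧ IndepDom G (A ∪ B)

/-- `π` is a partition of the vertex set into nonempty classes. -/
def IsPartition (π : Finset (Finset V)) : Prop :=
  (∀ A ∈ π, A.Nonempty) ∧ ∀ v : V, ∃! A : Finset V, A ∈ π ∧ v ∈ A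

/-- `π` is an independent coalition partition of `G`. -/
def IsICPartition (G : SimpleGraph V) (π : Finset (Finset V)) : Prop :=
  IsPartition π ∧
    ∀ A ∈ π, (∃ v : V, (A : Set V) = {v} ∧ Dominating G (A : Set V)) ∨
      (¬ IndepDom G (A : Set V) ∧
        ∃ B ∈ π, B ≠ A ∧ ICCoalition G (A : Set V) (B : Set V))

/-- The independent coalition number: the maximum number of classes of an
ic-partition of `G`. -/
noncomputable def IC (G : SimpleGraph V) : ℕ :=
  sSup {k | ∃ π : Finset (Finset V), IsICPartition G π ∧ π.card = k}


/-- The star graph `K_{1,n-1}` on `n` vertices. -/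
def starGraph (n : ℕ) : SimpleGraph (Fin n) :=
  SimpleGraph.fromRel (fun u _ => (u : ℕ) = 0)

/-- The double star `S_{p,q}`: the two support vertices `Sum.inr (Sum.inr 0)` and
`Sum.inr (Sum.inr 1)` are adjacent, the `p` leaves `Sum.inl i` are adjacent to the
first support vertex, and the `q` leaves `Sum.inr (Sum.inl j)` are adjacent to the
second support vertex. -/
def doubleStar (p q : ℕ) : SimpleGraph (Fin p ⊕ Fin q ⊕ Fin 2) :=
  SimpleGraph.fromRel (fun u v =>
    (u = Sum.inr (Sum.inr 0) ∧ v = Sum.inr (Sum.inr 1)) ∨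
    ((∃ i : Fin p, u = Sum.inl i) ∧ v = Sum.inr (Sum.inr 0)) ∨
    ((∃ j : Fin q, u = Sum.inr (Sum.inl j)) ∧ v = Sum.inr (Sum.inr 1)))

/-!
An ic-partition with `n - 1` classes consists of one pair `{x, y}` and singletons.

If some vertex `c` dominates the tree, the coalition of `{x, y}` with its partner consists of all
the other vertices, as there are no triangles; hence the tree is `K_{1,3}`.

Otherwise take two disjoint pendant edges. A dominating set meets both of them, so a singleton
outside their union `K` has no singleton partner, and its partner must be `{x, y}`. If there are
two vertices outside `K`, then `{x, y} ⊆ K`, each of the two is dominated by the other together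
with `x` and `y`, and independence makes them adjacent; so there are at most two such vertices.
Two of them force the path on six vertices and one forces the path on five vertices or `S_{1,2}`.
Since a tree is minimally connected, it is identified by exhibiting enough of its edges.
-/

theorem IndepSet.subset {G : SimpleGraph V} {A B : Set V} (hB : IndepSet G B) (hAB : A ⊆ B) :
    IndepSet G A :=
  fun _ hu _ hv => hB (hAB hu) (hAB hv)

theorem dominating_singleton_iff {G : SimpleGraph V} {c : V} :
    Dominating G {c} ↔ ∀ v, v ≠ c → G.Adj c v := by
  simp [Dominating, or_iff_not_imp_left]

theorem IndepSet.not_dominating_of_ssubset {G : SimpleGraph V} {A B : Set V} (hB : IndepSet G B)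
    (hAB : A ⊂ B) : ¬ Dominating G A := by
  obtain ⟨v, hvB, hvA⟩ := Set.exists_of_ssubset hAB
  intro hA
  obtain hv | ⟨u, hu, huv⟩ := hA v
  · exact hvA hv
  · exact hB (hAB.subset hu) hvB huv

theorem icCoalition_iff {G : SimpleGraph V} {A B : Set V} (hA : A.Nonempty) (hB : B.Nonempty) :
    ICCoalition G A B ↔ Disjoint A B ∧ IndepDom G (A ∪ B) := by
  refine ⟨fun h => ⟨h.1, h.2.2.2.2.2⟩, fun ⟨hd, h⟩ => ?_⟩
  have hAss : A ⊂ A ∪ B := Set.ssubset_union_left_iff.2 fun hBA =>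
    hB.ne_empty (hd.eq_bot_of_ge hBA)
  have hBss : B ⊂ A ∪ B := Set.ssubset_union_right_iff.2 fun hAB =>
    hA.ne_empty (hd.eq_bot_of_le hAB)
  exact ⟨hd, h.1.subset hAss.subset, h.1.subset hBss.subset,
    fun h' => h.1.not_dominating_of_ssubset hAss h'.2,
    fun h' => h.1.not_dominating_of_ssubset hBss h'.2, h⟩

theorem IsPartition.disjoint {π : Finset (Finset V)} (hπ : IsPartition π) {A B : Finset V}
    (hA : A ∈ π) (hB : B ∈ π) (hAB : A ≠ B) : Disjoint A B :=
  Finset.disjoint_left.2 fun v hvA hvB => hAB ((hπ.2 v).unique ⟨hA, hvA⟩ ⟨hB, hvB⟩)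

theorem isICPartition_iff {G : SimpleGraph V} {π : Finset (Finset V)} :
    IsICPartition G π ↔ IsPartition π ∧
      ∀ A ∈ π, (∃ v : V, A = {v} ∧ Dominating G {v}) ∨
        ∃ B ∈ π, B ≠ A ∧ IndepDom G (A ∪ B : Set V) := by
  refine and_congr_right fun hπ => forall₂_congr fun A hA => or_congr ?_ ?_
  · refine exists_congr fun v => ?_
    rw [Finset.coe_eq_singleton]
    exact and_congr_right (by rintro rfl; simp)
  · have hcoal : ∀ B ∈ π, B ≠ A → (ICCoalition G A B ↔ IndepDom G (A ∪ B : Set V)) :=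
      fun B hB hBA => by
        rw [icCoalition_iff (hπ.1 A hA).to_set (hπ.1 B hB).to_set,
          and_iff_right (Finset.disjoint_coe.2 (hπ.disjoint hA hB hBA.symm))]
    constructor
    · rintro ⟨-, B, hB, hBA, h⟩
      exact ⟨B, hB, hBA, (hcoal B hB hBA).1 h⟩
    · rintro ⟨B, hB, hBA, h⟩
      have h' := (hcoal B hB hBA).2 h
      exact ⟨h'.2.2.2.1, B, hB, hBA, h'⟩

section Congr

variable {W : Type*} {G : SimpleGraph V} {H : SimpleGraph W}

theorem dominating_image_iff (e : G ≃g H) {S : Set V} : Dominating H (e '' S) ↔ Dominating G S := by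
  simp [Dominating, e.surjective.forall, e.map_adj_iff]

theorem indepSet_image_iff (e : G ≃g H) {S : Set V} : IndepSet H (e '' S) ↔ IndepSet G S := by
  simp [IndepSet, e.map_adj_iff]

theorem indepDom_image_iff (e : G ≃g H) {S : Set V} : IndepDom H (e '' S) ↔ IndepDom G S :=
  and_congr (indepSet_image_iff e) (dominating_image_iff e)

theorem IsPartition.map (e : V ≃ W) {π : Finset (Finset V)} (hπ : IsPartition π) :
    IsPartition (π.map (Finset.mapEmbedding e.toEmbedding).toEmbedding) := by
  constructor
  · simpa using hπ.1
  · intro w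
    obtain ⟨A, ⟨hA, hwA⟩, huniq⟩ := hπ.2 (e.symm w)
    refine ⟨A.map e.toEmbedding, ⟨by simpa using hA, by simpa using hwA⟩, ?_⟩
    rintro _ ⟨hmem, hwB⟩
    obtain ⟨B, hB, rfl⟩ := Finset.mem_map.1 hmem
    rw [← huniq B ⟨hB, by simpa using hwB⟩]
    rfl

theorem IsICPartition.map (e : G ≃g H) {π : Finset (Finset V)} (hπ : IsICPartition G π) :
    IsICPartition H (π.map (Finset.mapEmbedding e.toEquiv.toEmbedding).toEmbedding) := by
  obtain ⟨hpart, hclass⟩ := isICPartition_iff.1 hπ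
  refine isICPartition_iff.2 ⟨hpart.map e.toEquiv, Finset.forall_mem_map.2 fun A hA => ?_⟩
  obtain ⟨v, rfl, hv⟩ | ⟨B, hB, hBA, h⟩ := hclass A hA
  · refine Or.inl ⟨e v, by simp, ?_⟩
    simpa using (dominating_image_iff e).2 hv
  · refine Or.inr ⟨_, Finset.mem_map_of_mem _ hB, by simpa using hBA, ?_⟩
    simpa [Set.image_union] using (indepDom_image_iff e).2 h

theorem IC_congr (e : G ≃g H) : IC G = IC H := by
  refine congrArg sSup (Set.Subset.antisymm ?_ ?_)
  · rintro _ ⟨π, hπ, rfl⟩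
    exact ⟨_, hπ.map e, Finset.card_map _⟩
  · rintro _ ⟨π, hπ, rfl⟩
    exact ⟨_, hπ.map e.symm, Finset.card_map _⟩

end Congr

/-- The partition of `V` into `{x, y}` and singletons is an ic-partition of `G`, spelled out in
terms of vertices: the class `{x, y}` has a singleton partner, and every other class dominates `G`,
or is a partner of `{x, y}`, or of another singleton. -/
structure IsICPair (G : SimpleGraph V) (x y : V) : Prop where
  ne : x ≠ y
  exists_partner : ∃ z, z ≠ x ∧ z ≠ y ∧ IndepDom G {z, x, y}
  singleton_class : ∀ z, z ≠ x → z ≠ y → Dominating G {z} ∨ IndepDom G {z, x, y} ∨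
    ∃ w, w ≠ x ∧ w ≠ y ∧ w ≠ z ∧ IndepDom G {w, z}

theorem isICPair_iff {G : SimpleGraph V} {x y : V} :
    IsICPair G x y ↔ x ≠ y ∧ (∃ z, z ≠ x ∧ z ≠ y ∧ IndepDom G {z, x, y}) ∧
      ∀ z, z ≠ x → z ≠ y → Dominating G {z} ∨ IndepDom G {z, x, y} ∨
        ∃ w, w ≠ x ∧ w ≠ y ∧ w ≠ z ∧ IndepDom G {w, z} :=
  ⟨fun ⟨hne, hpartner, hclass⟩ => ⟨hne, hpartner, hclass⟩,
    fun ⟨hne, hpartner, hclass⟩ => ⟨hne, hpartner, hclass⟩⟩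

section Card

variable [Fintype V] {π : Finset (Finset V)}

theorem IsPartition.sum_card (hπ : IsPartition π) : ∑ A ∈ π, A.card = Fintype.card V := by
  classical
  exact (Finpartition.ofExistsUnique π (fun _ _ => Finset.subset_univ _) (fun v _ => hπ.2 v)
    fun hempty => by simpa using hπ.1 ∅ hempty).sum_card_parts

theorem IsPartition.sum_card_sub_one (hπ : IsPartition π) :
    ∑ A ∈ π, (A.card - 1) + π.card = Fintype.card V := by
  rw [← hπ.sum_card, Finset.card_eq_sum_ones, ← Finset.sum_add_distrib]
  exact Finset.sum_congr rfl fun A hA => Nat.sub_add_cancel (hπ.1 A hA).card_pos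

theorem IsPartition.card_le (hπ : IsPartition π) : π.card ≤ Fintype.card V :=
  hπ.sum_card_sub_one ▸ Nat.le_add_left _ _

end Card

section MaxClasses

variable [Finite V] {G : SimpleGraph V}

theorem bddAbove_card_isICPartition (G : SimpleGraph V) :
    BddAbove {k | ∃ π : Finset (Finset V), IsICPartition G π ∧ π.card = k} := by
  have := Fintype.ofFinite V
  refine ⟨Fintype.card V, ?_⟩
  rintro _ ⟨ρ, hρ, rfl⟩
  exact hρ.1.card_le

theorem IsICPartition.card_le_IC {π : Finset (Finset V)} (hπ : IsICPartition G π) : π.card ≤ IC G :=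
  le_csSup (bddAbove_card_isICPartition G) ⟨π, hπ, rfl⟩

theorem exists_isICPartition_card_eq_IC (hG : IC G ≠ 0) :
    ∃ π, IsICPartition G π ∧ π.card = IC G := by
  refine Nat.sSup_mem (Set.nonempty_iff_ne_empty.2 fun hempty => hG ?_)
    (bddAbove_card_isICPartition G)
  simp [IC, hempty]

end MaxClasses

theorem singleton_ne_pair [DecidableEq V] {x y : V} (hxy : x ≠ y) (z : V) :
    ({z} : Finset V) ≠ {x, y} := by
  intro h
  simpa [hxy] using congrArg Finset.card h

section PairPartition

variable [Fintype V] [DecidableEq V] {G : SimpleGraph V} {π : Finset (Finset V)}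

variable (V) in
/-- The partition of `V` into singletons. -/
def singletonPartition : Finset (Finset V) :=
  Finset.univ.image singleton

/-- The partition of `V` whose only class other than a singleton is `{x, y}`. -/
def pairPartition (x y : V) : Finset (Finset V) :=
  insert {x, y} (({x, y}ᶜ : Finset V).image singleton)

theorem card_singletonPartition : (singletonPartition V).card = Fintype.card V :=
  Finset.card_image_of_injective _ Finset.singleton_injective

theorem card_pairPartition {x y : V} (hxy : x ≠ y) :
    (pairPartition x y).card + 1 = Fintype.card V := by
  have hnotMem : ({x, y} : Finset V) ∉ ({x, y}ᶜ : Finset V).image singleton := by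
    simp only [Finset.mem_image, not_exists, not_and]
    exact fun z _ => singleton_ne_pair hxy z
  rw [pairPartition, Finset.card_insert_of_notMem hnotMem,
    Finset.card_image_of_injective _ Finset.singleton_injective, add_assoc,
    ← Finset.card_compl_add_card {x, y}, Finset.card_pair hxy]

theorem forall_mem_pairPartition {x y : V} {P : Finset V → Prop} :
    (∀ A ∈ pairPartition x y, P A) ↔ P {x, y} ∧ ∀ z, z ≠ x → z ≠ y → P {z} := by
  simp only [pairPartition, Finset.forall_mem_insert, Finset.forall_mem_image]
  simp

theorem exists_mem_pairPartition {x y : V} {P : Finset V → Prop} :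
    (∃ A ∈ pairPartition x y, P A) ↔ P {x, y} ∨ ∃ z, z ≠ x ∧ z ≠ y ∧ P {z} := by
  simp [pairPartition, and_assoc]

theorem isPartition_singletonPartition : IsPartition (singletonPartition V) :=
  ⟨by simp [singletonPartition], fun v => ⟨{v}, by simp [singletonPartition], by
    simp only [singletonPartition, Finset.mem_image, Finset.mem_univ, true_and]
    rintro _ ⟨⟨w, rfl⟩, hw⟩
    rw [Finset.mem_singleton.1 hw]⟩⟩

theorem isPartition_pairPartition (x y : V) : IsPartition (pairPartition x y) := by
  refine ⟨forall_mem_pairPartition.2 (by simp), fun v => ?_⟩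
  have hsingle (z : V) (hzx : z ≠ x) (hzy : z ≠ y) : {z} ∈ pairPartition x y := by
    simp [pairPartition, hzx, hzy]
  by_cases hv : v = x ∨ v = y
  · refine ⟨{x, y}, ⟨by simp [pairPartition], by simpa using hv⟩, ?_⟩
    simp only [and_imp]
    exact forall_mem_pairPartition.2 (by grind)
  · refine ⟨{v}, ⟨hsingle v (by tauto) (by tauto), by simp⟩, ?_⟩
    simp only [and_imp]
    exact forall_mem_pairPartition.2 (by grind)

theorem IsPartition.eq_singletonPartition (hπ : IsPartition π)
    (hcard : π.card = Fintype.card V) : π = singletonPartition V := by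
  refine Finset.eq_of_subset_of_card_le (fun A hA => ?_) (card_singletonPartition.trans_le hcard.ge)
  have hsum : ∑ A ∈ π, (A.card - 1) = 0 := by have := hπ.sum_card_sub_one; omega
  have hA1 := Finset.sum_eq_zero_iff.1 hsum A hA
  obtain ⟨v, rfl⟩ := Finset.card_eq_one.1 (by have := (hπ.1 A hA).card_pos; omega : A.card = 1)
  simp [singletonPartition]

theorem IsPartition.exists_eq_pairPartition (hπ : IsPartition π)
    (hcard : π.card + 1 = Fintype.card V) : ∃ x y, x ≠ y ∧ π = pairPartition x y := by
  have hsum : ∑ A ∈ π, (A.card - 1) = 1 := by have := hπ.sum_card_sub_one; omega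
  obtain ⟨D, hD, hDpos⟩ := Finset.exists_ne_zero_of_sum_ne_zero (hsum.trans_ne one_ne_zero)
  have hsplit := Finset.add_sum_erase π (fun A => A.card - 1) hD
  have hrest : ∑ A ∈ π.erase D, (A.card - 1) = 0 := by omega
  obtain ⟨x, y, hxy, rfl⟩ := Finset.card_eq_two.1 (by omega : D.card = 2)
  refine ⟨x, y, hxy, Finset.eq_of_subset_of_card_le (fun A hA => ?_) ?_⟩
  · by_cases hAD : A = {x, y}
    · simp [hAD, pairPartition]
    · have hA1 := Finset.sum_eq_zero_iff.1 hrest A (Finset.mem_erase.2 ⟨hAD, hA⟩)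
      obtain ⟨v, rfl⟩ := Finset.card_eq_one.1 (by have := (hπ.1 A hA).card_pos; omega : A.card = 1)
      have hv := hπ.disjoint hA hD hAD
      simpa [pairPartition] using Or.inr hv
  · have := card_pairPartition hxy
    omega

theorem isICPartition_singletonPartition_iff :
    IsICPartition G (singletonPartition V) ↔
      ∀ z, Dominating G {z} ∨ ∃ w, w ≠ z ∧ IndepDom G {w, z} := by
  rw [isICPartition_iff, and_iff_right isPartition_singletonPartition]
  simp [singletonPartition]

theorem isICPartition_pairPartition_iff {x y : V} (hxy : x ≠ y) :
    IsICPartition G (pairPartition x y) ↔ IsICPair G x y := by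
  have hne := singleton_ne_pair hxy
  simp only [isICPartition_iff, and_iff_right (isPartition_pairPartition x y),
    forall_mem_pairPartition, exists_mem_pairPartition, (hne _).symm]
  simp [isICPair_iff, hxy, hne, (hne _).symm, Set.union_comm _ ({x, y} : Set V)]

end PairPartition

section PairIC

variable [Fintype V] {G : SimpleGraph V}

theorem IsICPair.IC_eq {x y z : V} (hxy : IsICPair G x y) (hz : ¬ Dominating G {z})
    (hpair : ∀ w, w ≠ z → ¬ IndepDom G {w, z}) : IC G = Fintype.card V - 1 := by
  classical
  have hcard := card_pairPartition hxy.ne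
  refine IsGreatest.csSup_eq ⟨⟨pairPartition x y, (isICPartition_pairPartition_iff hxy.ne).2 hxy,
    by omega⟩, ?_⟩
  rintro _ ⟨π, hπ, rfl⟩
  refine Nat.le_sub_one_of_lt (hπ.1.card_le.lt_of_ne fun hfull => ?_)
  rw [hπ.1.eq_singletonPartition hfull, isICPartition_singletonPartition_iff] at hπ
  obtain h | ⟨w, hwz, h⟩ := hπ z
  · exact hz h
  · exact hpair w hwz h

theorem IC_ne_zero_of_card_eq_one (hV : Fintype.card V = 1) : IC G ≠ 0 := by
  classical
  have := Fintype.card_le_one_iff_subsingleton.1 hV.le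
  have hπ : IsICPartition G (singletonPartition V) :=
    isICPartition_singletonPartition_iff.2 fun z => Or.inl fun v => Or.inl (Subsingleton.elim v z)
  have := hπ.card_le_IC
  rw [card_singletonPartition] at this
  omega

theorem exists_isICPair_of_IC_eq [Nonempty V] (hG : IC G = Fintype.card V - 1) :
    ∃ x y, IsICPair G x y := by
  classical
  have hpos := Fintype.card_pos (α := V)
  have hIC : IC G ≠ 0 := fun h0 => IC_ne_zero_of_card_eq_one (G := G) (by omega) h0
  obtain ⟨π, hπ, hcard⟩ := exists_isICPartition_card_eq_IC hIC
  obtain ⟨x, y, hxy, rfl⟩ := hπ.1.exists_eq_pairPartition (by omega)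
  exact ⟨x, y, (isICPartition_pairPartition_iff hxy).1 hπ⟩

end PairIC

section Iso

variable {T : SimpleGraph V}

theorem nonempty_iso_of_bijective_hom {W : Type*} {H : SimpleGraph W} (hT : T.IsTree)
    (hH : H.Connected) (f : H →g T) (hf : Function.Bijective f) : Nonempty (T ≃g H) := by
  let e : W ≃ V := Equiv.ofBijective f hf
  have hle : H.map e.toEmbedding ≤ T :=
    (SimpleGraph.map_le_iff_le_comap _ _ _).2 fun _ _ h => f.map_adj h
  have hconn : (H.map e.toEmbedding).Connected := (SimpleGraph.Iso.map e H).connected_iff.1 hH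
  have heq : H.map e.toEmbedding = T :=
    (SimpleGraph.isTree_iff_minimal_connected.1 hT).eq_of_le hconn hle
  rw [← heq]
  exact ⟨(SimpleGraph.Iso.map e H).symm⟩

theorem nonempty_iso_pathGraph (hT : T.IsTree) {u v : V} {p : T.Walk u v} (hp : p.IsPath)
    (hmem : ∀ w, w ∈ p.support) : Nonempty (T ≃g SimpleGraph.pathGraph (p.length + 1)) := by
  refine nonempty_iso_of_bijective_hom hT (SimpleGraph.pathGraph_connected _) p.pathGraphHom
    ⟨fun i j hij => Fin.ext (hp.support_nodup.getElem_inj_iff.1 hij), fun w => ?_⟩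
  obtain ⟨i, hi, rfl⟩ := List.getElem_of_mem (hmem w)
  exact ⟨⟨i, by simpa using hi⟩, rfl⟩

theorem starGraph_connected (n : ℕ) : (starGraph (n + 1)).Connected := by
  refine SimpleGraph.connected_iff_exists_forall_reachable _ |>.2 ⟨0, fun i => ?_⟩
  obtain rfl | hi := eq_or_ne i 0
  · rfl
  · exact SimpleGraph.Adj.reachable (by simp [starGraph, hi.symm])

theorem nonempty_iso_starGraph [Fintype V] (hT : T.IsTree) {c : V} (hc : Dominating T {c})
    {n : ℕ} (hn : Fintype.card V = n + 1) : Nonempty (T ≃g starGraph (n + 1)) := by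
  classical
  let e₀ := (Fintype.equivFinOfCardEq hn).symm
  let e : Fin (n + 1) ≃ V := e₀.trans (Equiv.swap (e₀ 0) c)
  have he : e 0 = c := by simp [e]
  have hadj : ∀ i, i ≠ 0 → T.Adj c (e i) := fun i hi =>
    dominating_singleton_iff.1 hc _ (he ▸ e.injective.ne hi)
  have hhom : ∀ {i j}, (starGraph (n + 1)).Adj i j → T.Adj (e i) (e j) := by
    intro i j h
    simp only [starGraph, SimpleGraph.fromRel_adj, Fin.val_eq_zero_iff] at h
    obtain ⟨hij, rfl | rfl⟩ := h
    · exact he ▸ hadj j hij.symm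
    · exact he ▸ (hadj i hij).symm
  exact nonempty_iso_of_bijective_hom hT (starGraph_connected n) ⟨e, hhom⟩ e.bijective

theorem doubleStar_connected (p q : ℕ) : (doubleStar p q).Connected := by
  refine SimpleGraph.connected_iff_exists_forall_reachable _ |>.2 ⟨.inr (.inr 0), ?_⟩
  have hsupport : (doubleStar p q).Adj (.inr (.inr 0)) (.inr (.inr 1)) := by simp [doubleStar]
  rintro (i | j | k)
  · exact SimpleGraph.Adj.reachable (by simp [doubleStar])
  · exact hsupport.reachable.trans (SimpleGraph.Adj.reachable (by simp [doubleStar]))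
  · fin_cases k
    · rfl
    · exact hsupport.reachable

theorem nonempty_iso_doubleStar (hT : T.IsTree) {p q : ℕ} {a : Fin p → V} {b : Fin q → V} {c d : V}
    (hcd : T.Adj c d) (ha : ∀ i, T.Adj (a i) c) (hb : ∀ j, T.Adj (b j) d)
    (hbij : Function.Bijective (Sum.elim a (Sum.elim b ![c, d]))) :
    Nonempty (T ≃g doubleStar p q) := by
  have hhom : ∀ {u v}, (doubleStar p q).Adj u v →
      T.Adj (Sum.elim a (Sum.elim b ![c, d]) u) (Sum.elim a (Sum.elim b ![c, d]) v) := by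
    intro u v h
    rw [doubleStar, SimpleGraph.fromRel_adj] at h
    obtain ⟨-, (⟨rfl, rfl⟩ | ⟨⟨i, rfl⟩, rfl⟩ | ⟨⟨j, rfl⟩, rfl⟩) |
      (⟨rfl, rfl⟩ | ⟨⟨i, rfl⟩, rfl⟩ | ⟨⟨j, rfl⟩, rfl⟩)⟩ := h
    exacts [hcd, ha i, hb j, hcd.symm, (ha i).symm, (hb j).symm]
  exact nonempty_iso_of_bijective_hom hT (doubleStar_connected p q) ⟨_, hhom⟩ hbij

end Iso

section Pendant

variable {G T : SimpleGraph V} {l s l' s' v : V}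

/-- `l` is a leaf of `G` and `s` is its support vertex. -/
def IsPendant (G : SimpleGraph V) (l s : V) : Prop :=
  ∀ w, G.Adj l w ↔ w = s

theorem IsPendant.adj (h : IsPendant G l s) : G.Adj l s :=
  (h s).2 rfl

theorem IsPendant.mem_or_mem (h : IsPendant G l s) {S : Set V} (hS : Dominating G S) :
    l ∈ S ∨ s ∈ S := by
  obtain hl | ⟨u, hu, hul⟩ := hS l
  · exact Or.inl hl
  · exact Or.inr ((h u).1 hul.symm ▸ hu)

theorem exists_isPendant_of_forall_dist_le [Nontrivial V] (hT : T.IsTree) (r : V)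
    (hmax : ∀ w, T.dist r w ≤ T.dist r l) : ∃ s, IsPendant T l s := by
  obtain ⟨p, hp, hlen⟩ := hT.connected.exists_path_of_dist r l
  have hsupport : ∀ w, T.Adj l w → w = p.penultimate := by
    intro w hw
    refine hT.isAcyclic.eq_penultimate_of_adj_end hp hw ?_
    by_contra hwp
    -- extending `p` to `w` would give the path from `r` to `w`, longer than allowed by `hmax`
    obtain ⟨q, hq, hqlen⟩ := hT.connected.exists_path_of_dist r w
    have hpq : q = p.concat hw := (hT.existsUnique_path r w).unique hq (hp.concat hwp hw)
    have := hmax w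
    rw [← hqlen, hpq, SimpleGraph.Walk.length_concat] at this
    omega
  obtain ⟨s, hs⟩ := hT.connected.preconnected.exists_adj_of_nontrivial l
  exact ⟨s, fun w => ⟨fun hw => (hsupport w hw).trans (hsupport s hs).symm, fun hw => hw ▸ hs⟩⟩

/-- Vertex-disjoint pendant edges `l s` and `l' s'` with leaves `l` and `l'`. -/
structure DisjointPendants (G : SimpleGraph V) (l s l' s' : V) : Prop where
  left : IsPendant G l s
  right : IsPendant G l' s'
  nodup : [l, s, l', s'].Nodup

theorem exists_disjointPendants [Finite V] (hT : T.IsTree) (hdom : ∀ c, ¬ Dominating T {c}) :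
    ∃ l s l' s', DisjointPendants T l s l' s' := by
  obtain ⟨r⟩ := hT.connected.nonempty
  have hnt : Nontrivial V := not_subsingleton_iff_nontrivial.1 fun _ =>
    hdom r fun v => Or.inl (Subsingleton.elim v r)
  obtain ⟨l, hl⟩ := Finite.exists_max (T.dist r)
  obtain ⟨s, hls⟩ := exists_isPendant_of_forall_dist_le hT r hl
  obtain ⟨l', hl'⟩ := Finite.exists_max (T.dist s)
  obtain ⟨s', hls'⟩ := exists_isPendant_of_forall_dist_le hT s hl'
  have hdist : 1 < T.dist s l' := by
    obtain ⟨w, hws, hadj⟩ : ∃ w, w ≠ s ∧ ¬ T.Adj s w := by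
      simpa [dominating_singleton_iff] using hdom s
    refine lt_of_lt_of_le ?_ (hl' w)
    have := hT.connected.pos_dist_of_ne hws.symm
    have := mt SimpleGraph.dist_eq_one_iff_adj.1 hadj
    omega
  have hne : s ≠ l' := by rintro rfl; simp at hdist
  have hnadj : ¬ T.Adj s l' := fun h => hdist.ne' (SimpleGraph.dist_eq_one_iff_adj.2 h)
  refine ⟨l, s, l', s', hls, hls', ?_⟩
  have := hls.adj
  have := hls'.adj
  have := (hls l').1
  grind [SimpleGraph.adj_comm, SimpleGraph.Adj.ne]

namespace DisjointPendants

theorem symm (h : DisjointPendants G l s l' s') : DisjointPendants G l' s' l s :=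
  ⟨h.right, h.left, by have := h.nodup; grind⟩

theorem mem_of_indepDom_triple (h : DisjointPendants G l s l' s')
    (hv : v ∉ ({l, s, l', s'} : Set V)) {x y : V} (hxy : IndepDom G {v, x, y}) :
    x ∈ ({l, s, l', s'} : Set V) ∧ y ∈ ({l, s, l', s'} : Set V) := by
  have hl := h.left.mem_or_mem hxy.2
  have hr := h.right.mem_or_mem hxy.2
  have := h.nodup
  simp only [Set.mem_insert_iff, Set.mem_singleton_iff] at hl hr hv ⊢
  grind

theorem not_indepDom_pair (h : DisjointPendants G l s l' s')
    (hv : v ∉ ({l, s, l', s'} : Set V)) (w : V) : ¬ IndepDom G {w, v} := by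
  intro hw
  have hl := h.left.mem_or_mem hw.2
  have hr := h.right.mem_or_mem hw.2
  have := h.nodup
  simp only [Set.mem_insert_iff, Set.mem_singleton_iff] at hl hr hv
  grind

theorem exists_notMem (h : DisjointPendants G l s l' s') {x y z : V} (hxy : x ≠ y)
    (hzx : z ≠ x) (hzy : z ≠ y) (hind : IndepSet G {z, x, y}) :
    ∃ v, v ∉ ({l, s, l', s'} : Set V) := by
  by_contra! hall
  have hl := h.left.adj
  have hr := h.right.adj
  have hindep : ∀ a ∈ ({z, x, y} : Set V), ∀ b ∈ ({z, x, y} : Set V), ¬ G.Adj a b :=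
    fun a ha b hb => hind ha hb
  simp only [Set.mem_insert_iff, Set.mem_singleton_iff] at hall hindep
  have := hall x
  have := hall y
  have := hall z
  have := hl.symm
  have := hr.symm
  grind

end DisjointPendants

end Pendant

section Tree

variable {T : SimpleGraph V} {l s l' s' v x y a b : V}

theorem not_adj_of_adj_of_adj (hT : T.IsAcyclic) {c : V} (hab : T.Adj a b) (hac : T.Adj a c) :
    ¬ T.Adj b c := by
  classical
  exact fun hbc =>
    hT.cliqueFree le_rfl {a, b, c} (SimpleGraph.is3Clique_triple_iff.2 ⟨hab, hac, hbc⟩)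

theorem eq_compl_singleton_of_indepDom (hT : T.IsAcyclic) {c : V} (hc : Dominating T {c})
    {S : Set V} (hS : IndepDom T S) (hnt : S.Nontrivial) : S = {c}ᶜ := by
  rw [dominating_singleton_iff] at hc
  have hcS : c ∉ S := fun hcS =>
    have ⟨u, hu, huc⟩ := hnt.exists_ne c
    hS.1 hcS hu (hc u huc)
  refine Set.Subset.antisymm (Set.subset_compl_singleton_iff.2 hcS) fun v hv => ?_
  obtain hvS | ⟨u, hu, huv⟩ := hS.2 v
  · exact hvS
  · exact absurd huv (not_adj_of_adj_of_adj hT (hc u (ne_of_mem_of_not_mem hu hcS)) (hc v hv))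

theorem IsICPair.nonempty_iso_starGraph [Finite V] (hT : T.IsTree) (hxy : IsICPair T x y) {c : V}
    (hc : Dominating T {c}) : Nonempty (T ≃g starGraph 4) := by
  obtain ⟨z, hzx, hzy, hz⟩ := hxy.exists_partner
  have hcompl : ({z, x, y} : Set V) = {c}ᶜ :=
    eq_compl_singleton_of_indepDom hT.isAcyclic hc hz ⟨z, by simp, x, by simp, hzx⟩
  have := Fintype.ofFinite V
  refine ICNL.nonempty_iso_starGraph hT hc ?_
  rw [← Nat.card_eq_fintype_card, ← Set.ncard_add_ncard_compl {c}, ← hcompl, Set.ncard_singleton,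
    Set.ncard_eq_three.2 ⟨z, x, y, hzx, hzy, hxy.ne, rfl⟩]

namespace DisjointPendants

theorem nonempty_iso_of_adj (hT : T.IsTree) (h : DisjointPendants T l s l' s')
    (hv : v ∉ ({l, s, l', s'} : Set V)) (hall : ∀ w ∉ ({l, s, l', s'} : Set V), w = v)
    (hvs : T.Adj v s) :
    Nonempty (T ≃g SimpleGraph.pathGraph 5) ∨ Nonempty (T ≃g doubleStar 1 2) := by
  have hls := h.left.adj
  have hls' := h.right.adj
  have hnodup := h.nodup
  simp only [Set.mem_insert_iff, Set.mem_singleton_iff] at hv hall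
  have hcross : T.Adj s s' ∨ T.Adj v s' := by
    obtain ⟨p⟩ := hT.connected.preconnected s s'
    obtain ⟨⟨⟨i, o⟩, hio⟩, -, hi, ho⟩ :=
      p.exists_boundary_dart {l, s, v} (by simp) (by grind)
    simp only [Set.mem_insert_iff, Set.mem_singleton_iff] at hi ho hio
    have := hall o
    have := h.left o
    have := (h.right i).1
    grind [SimpleGraph.adj_comm]
  obtain hss' | hvs' := hcross
  · right
    refine nonempty_iso_doubleStar hT (a := ![l']) (b := ![l, v]) hss'.symm
      (Fin.forall_fin_one.2 hls') (Fin.forall_fin_two.2 ⟨hls, hvs⟩) ⟨?_, fun w => ?_⟩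
    · simp only [Function.Injective, Sum.forall, Fin.forall_fin_one, Fin.forall_fin_two,
        Sum.elim_inl, Sum.elim_inr, Matrix.cons_val_zero, Matrix.cons_val_one]
      grind
    · obtain rfl | hw := eq_or_ne w v
      · exact ⟨.inr (.inl 1), rfl⟩
      · obtain rfl | rfl | rfl | rfl := not_not.1 (mt (hall w) hw)
        exacts [⟨.inr (.inl 0), rfl⟩, ⟨.inr (.inr 1), rfl⟩, ⟨.inl 0, rfl⟩, ⟨.inr (.inr 0), rfl⟩]
  · left
    let p := SimpleGraph.Walk.cons hls (.cons hvs.symm (.cons hvs' (.cons hls'.symm .nil)))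
    have hp : p.IsPath := .mk' (show [l, s, v, s', l'].Nodup by grind)
    refine nonempty_iso_pathGraph hT hp fun w => show w ∈ [l, s, v, s', l'] from ?_
    have := hall w
    grind

theorem nonempty_iso_of_forall_eq (hT : T.IsTree) (h : DisjointPendants T l s l' s')
    (hv : v ∉ ({l, s, l', s'} : Set V)) (hall : ∀ w ∉ ({l, s, l', s'} : Set V), w = v) :
    Nonempty (T ≃g SimpleGraph.pathGraph 5) ∨ Nonempty (T ≃g doubleStar 1 2) := by
  have : Nontrivial V := ⟨l, s, h.left.adj.ne⟩
  obtain ⟨w, hvw⟩ := hT.connected.preconnected.exists_adj_of_nontrivial v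
  have hcomm : ({l', s', l, s} : Set V) = {l, s, l', s'} := by grind
  have hw : w = s ∨ w = s' := by
    have := h.left v
    have := h.right v
    have := hall w
    simp only [Set.mem_insert_iff, Set.mem_singleton_iff] at *
    grind [SimpleGraph.adj_comm, SimpleGraph.Adj.ne]
  obtain rfl | rfl := hw
  · exact h.nonempty_iso_of_adj hT hv hall hvw
  · exact h.symm.nonempty_iso_of_adj hT (hcomm ▸ hv) (hcomm ▸ hall) hvw

theorem adj_support_of_dominating (h : DisjointPendants T l s l' s') {S : Set V}
    (hS : Dominating T S) (hSK : S ⊆ {l, s, l', s'}) (hv : v ∉ ({l, s, l', s'} : Set V)) :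
    T.Adj s v ∨ T.Adj s' v := by
  obtain hvS | ⟨u, hu, huv⟩ := hS v
  · exact absurd (hSK hvS) hv
  · have hu := hSK hu
    have := h.left v
    have := h.right v
    simp only [Set.mem_insert_iff, Set.mem_singleton_iff] at hu hv
    grind

theorem indepDom_of_isICPair (h : DisjointPendants T l s l' s') (hxy : IsICPair T x y)
    (hdom : ∀ c, ¬ Dominating T {c}) (hv : v ∉ ({l, s, l', s'} : Set V)) (hvx : v ≠ x)
    (hvy : v ≠ y) : IndepDom T {v, x, y} := by
  obtain hv' | hv' | ⟨w, -, -, -, hw⟩ := hxy.singleton_class v hvx hvy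
  · exact absurd hv' (hdom v)
  · exact hv'
  · exact absurd hw (h.not_indepDom_pair hv w)

theorem mem_of_isICPair (h : DisjointPendants T l s l' s') (hxy : IsICPair T x y)
    (hdom : ∀ c, ¬ Dominating T {c}) (ha : a ∉ ({l, s, l', s'} : Set V))
    (hb : b ∉ ({l, s, l', s'} : Set V)) (hab : a ≠ b) :
    x ∈ ({l, s, l', s'} : Set V) ∧ y ∈ ({l, s, l', s'} : Set V) := by
  obtain ⟨v, hv, hvx, hvy⟩ : ∃ v ∉ ({l, s, l', s'} : Set V), v ≠ x ∧ v ≠ y := by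
    by_contra! hcover
    obtain ⟨z, -, -, hz⟩ := hxy.exists_partner
    have := hcover a ha
    have := hcover b hb
    have := h.left.mem_or_mem hz.2
    have := h.right.mem_or_mem hz.2
    have := h.nodup
    simp only [Set.mem_insert_iff, Set.mem_singleton_iff] at *
    grind
  exact h.mem_of_indepDom_triple hv (h.indepDom_of_isICPair hxy hdom hv hvx hvy)

theorem exists_dominating_subset (h : DisjointPendants T l s l' s') (hxy : IsICPair T x y)
    (hdom : ∀ c, ¬ Dominating T {c}) (hx : x ∈ ({l, s, l', s'} : Set V)) :
    ∃ S ⊆ ({l, s, l', s'} : Set V), Dominating T S := by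
  obtain ⟨z, hz, hzx⟩ : ∃ z ∈ ({l, s, l', s'} : Set V), T.Adj z x := by
    obtain rfl | rfl | rfl | rfl := hx
    exacts [⟨s, by simp, h.left.adj.symm⟩, ⟨l, by simp, h.left.adj⟩,
      ⟨s', by simp, h.right.adj.symm⟩, ⟨l', by simp, h.right.adj⟩]
  have hzy : z ≠ y := by
    rintro rfl
    obtain ⟨u, -, -, hu⟩ := hxy.exists_partner
    exact hu.1 (by simp) (by simp) hzx
  obtain hz' | hz' | ⟨w, -, -, -, hw⟩ := hxy.singleton_class z hzx.ne hzy
  · exact absurd hz' (hdom z)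
  · exact absurd hzx (hz'.1 (by simp) (by simp))
  · refine ⟨{w, z}, Set.pair_subset ?_ hz, hw.2⟩
    by_contra hwK
    exact h.not_indepDom_pair hwK z (Set.pair_comm w z ▸ hw)

theorem adj_of_isICPair (h : DisjointPendants T l s l' s') (hxy : IsICPair T x y)
    (hdom : ∀ c, ¬ Dominating T {c}) (ha : a ∉ ({l, s, l', s'} : Set V))
    (hb : b ∉ ({l, s, l', s'} : Set V)) (hab : a ≠ b) : T.Adj a b := by
  obtain ⟨hx, hy⟩ := h.mem_of_isICPair hxy hdom ha hb hab
  have htriple : ∀ v ∉ ({l, s, l', s'} : Set V), IndepDom T {v, x, y} := fun v hv =>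
    h.indepDom_of_isICPair hxy hdom hv (ne_of_mem_of_not_mem hx hv).symm
      (ne_of_mem_of_not_mem hy hv).symm
  have hbx : ¬ T.Adj x b := (htriple b hb).1 (by simp) (by simp)
  have hby : ¬ T.Adj y b := (htriple b hb).1 (by simp) (by simp)
  obtain hmem | ⟨u, hu, hub⟩ := (htriple a ha).2 b
  · obtain rfl | rfl | rfl := hmem
    exacts [absurd rfl hab, absurd hx hb, absurd hy hb]
  · obtain rfl | rfl | rfl := hu
    exacts [hub, absurd hub hbx, absurd hub hby]

theorem nonempty_iso_pathGraph_six_of_adj (hT : T.IsTree) (h : DisjointPendants T l s l' s')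
    (ha : a ∉ ({l, s, l', s'} : Set V)) (hb : b ∉ ({l, s, l', s'} : Set V))
    (hall : ∀ w ∉ ({l, s, l', s'} : Set V), w = a ∨ w = b) (hsa : T.Adj s a) (hab : T.Adj a b)
    (hsb : T.Adj s' b) : Nonempty (T ≃g SimpleGraph.pathGraph 6) := by
  let p := SimpleGraph.Walk.cons h.left.adj
    (.cons hsa (.cons hab (.cons hsb.symm (.cons h.right.adj.symm .nil))))
  have hne := hab.ne
  have hnodup := h.nodup
  simp only [Set.mem_insert_iff, Set.mem_singleton_iff] at ha hb hall
  have hp : p.IsPath := .mk' (show [l, s, a, b, s', l'].Nodup by grind)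
  refine nonempty_iso_pathGraph hT hp fun w => show w ∈ [l, s, a, b, s', l'] from ?_
  have := hall w
  simp only [List.mem_cons, List.not_mem_nil, or_false]
  grind

theorem nonempty_iso_pathGraph_six (hT : T.IsTree) (h : DisjointPendants T l s l' s')
    (hxy : IsICPair T x y) (hdom : ∀ c, ¬ Dominating T {c})
    (ha : a ∉ ({l, s, l', s'} : Set V)) (hb : b ∉ ({l, s, l', s'} : Set V)) (hne : a ≠ b) :
    Nonempty (T ≃g SimpleGraph.pathGraph 6) := by
  have hab : T.Adj a b := h.adj_of_isICPair hxy hdom ha hb hne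
  have hall : ∀ w ∉ ({l, s, l', s'} : Set V), w = a ∨ w = b := by
    intro w hw
    by_contra! hwab
    exact not_adj_of_adj_of_adj hT.isAcyclic hab (h.adj_of_isICPair hxy hdom ha hw hwab.1.symm)
      (h.adj_of_isICPair hxy hdom hb hw hwab.2.symm)
  obtain ⟨hx, -⟩ := h.mem_of_isICPair hxy hdom ha hb hne
  obtain ⟨S, hSK, hS⟩ := h.exists_dominating_subset hxy hdom hx
  have hnotBoth : ∀ c, T.Adj c a → ¬ T.Adj c b := fun c hca hcb =>
    not_adj_of_adj_of_adj hT.isAcyclic hca hcb hab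
  obtain hsa | hsa' := h.adj_support_of_dominating hS hSK ha
  · have hsb' := (h.adj_support_of_dominating hS hSK hb).resolve_left (hnotBoth s hsa)
    exact h.nonempty_iso_pathGraph_six_of_adj hT ha hb hall hsa hab hsb'
  · have hsb := (h.adj_support_of_dominating hS hSK hb).resolve_right (hnotBoth s' hsa')
    exact h.nonempty_iso_pathGraph_six_of_adj hT hb ha (fun w hw => (hall w hw).symm) hsb hab.symm
      hsa'

end DisjointPendants

theorem IsICPair.nonempty_iso [Finite V] (hT : T.IsTree) (hxy : IsICPair T x y) :
    Nonempty (T ≃g SimpleGraph.pathGraph 5) ∨ Nonempty (T ≃g SimpleGraph.pathGraph 6) ∨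
      Nonempty (T ≃g doubleStar 1 2) ∨ Nonempty (T ≃g starGraph 4) := by
  by_cases hdom : ∃ c, Dominating T {c}
  · obtain ⟨c, hc⟩ := hdom
    exact .inr (.inr (.inr (hxy.nonempty_iso_starGraph hT hc)))
  rw [not_exists] at hdom
  obtain ⟨l, s, l', s', h⟩ := exists_disjointPendants hT hdom
  obtain ⟨z, hzx, hzy, hz⟩ := hxy.exists_partner
  obtain ⟨v, hv⟩ := h.exists_notMem hxy.ne hzx hzy hz.1
  by_cases hall : ∀ w ∉ ({l, s, l', s'} : Set V), w = v
  · obtain hpath | hstar := h.nonempty_iso_of_forall_eq hT hv hall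
    exacts [.inl hpath, .inr (.inr (.inl hstar))]
  · push Not at hall
    obtain ⟨w, hw, hwv⟩ := hall
    exact .inr (.inl (h.nonempty_iso_pathGraph_six hT hxy hdom hw hv hwv))

end Tree

section Values

variable {G : SimpleGraph V} [Fintype V] [DecidableRel G.Adj]

instance (S : Set V) [DecidablePred (· ∈ S)] : Decidable (Dominating G S) :=
  inferInstanceAs (Decidable (∀ v : V, v ∈ S ∨ ∃ u ∈ S, G.Adj u v))

instance (S : Set V) [DecidablePred (· ∈ S)] : Decidable (IndepDom G S) :=
  have : Decidable (IndepSet G S) :=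
    inferInstanceAs (Decidable (∀ u : V, u ∈ S → ∀ v : V, v ∈ S → ¬ G.Adj u v))
  inferInstanceAs (Decidable (_ ∧ _))

instance [DecidableEq V] (x y : V) : Decidable (IsICPair G x y) :=
  decidable_of_iff' _ isICPair_iff

instance (n : ℕ) : DecidableRel (SimpleGraph.pathGraph n).Adj :=
  fun _ _ => decidable_of_iff' _ SimpleGraph.pathGraph_adj

instance (n : ℕ) : DecidableRel (starGraph n).Adj :=
  inferInstanceAs (DecidableRel (SimpleGraph.fromRel _).Adj)

instance (p q : ℕ) : DecidableRel (doubleStar p q).Adj :=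
  fun u v => decidable_of_iff' _ (SimpleGraph.fromRel_adj _ u v)

theorem IC_pathGraph_five : IC (SimpleGraph.pathGraph 5) = 4 :=
  (show IsICPair (SimpleGraph.pathGraph 5) 0 4 by decide).IC_eq (z := 2) (by decide) (by decide)

theorem IC_pathGraph_six : IC (SimpleGraph.pathGraph 6) = 5 :=
  (show IsICPair (SimpleGraph.pathGraph 6) 0 5 by decide).IC_eq (z := 2) (by decide) (by decide)

theorem IC_doubleStar_one_two : IC (doubleStar 1 2) = 4 :=
  (show IsICPair (doubleStar 1 2) (.inr (.inl 0)) (.inr (.inr 0)) by decide).IC_eq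
    (z := .inr (.inl 1)) (by decide) (by decide)

theorem IC_starGraph_four : IC (starGraph 4) = 3 :=
  (show IsICPair (starGraph 4) 1 2 by decide).IC_eq (z := 1) (by decide) (by decide)

end Values

theorem stmt_19 {V : Type*} [Fintype V] (T : SimpleGraph V) (n : ℕ)
    (hn : Fintype.card V = n) (hT : T.IsTree) :
    IC T = n - 1 ↔
      (Nonempty (T ≃g SimpleGraph.pathGraph 5) ∨
       Nonempty (T ≃g SimpleGraph.pathGraph 6) ∨
       Nonempty (T ≃g doubleStar 1 2) ∨
       Nonempty (T ≃g starGraph 4)) := by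
  subst hn
  have := hT.connected.nonempty
  constructor
  · intro hIC
    obtain ⟨x, y, hxy⟩ := exists_isICPair_of_IC_eq hIC
    exact hxy.nonempty_iso hT
  · rintro (⟨⟨e⟩⟩ | ⟨⟨e⟩⟩ | ⟨⟨e⟩⟩ | ⟨⟨e⟩⟩) <;> rw [IC_congr e, Fintype.card_congr e.toEquiv]
    exacts [IC_pathGraph_five, IC_pathGraph_six, IC_doubleStar_one_two, IC_starGraph_four]

end ICNL
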